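/- Let f : ℂ → ℂ be a transcendental entire function that is strongly polynomial-like. Then either K(f) is connected, or else for every point z ∈ ∂K(f) and every open neighbourhood V of z, the set of connected components of K(f) that meet V is uncountable. -/

import Mathlib

open Filter Topology

/-- The set `K(f)` of points whose orbit under iteration of `f` is bounded. -/
def boundedOrbitSet (f : ℂ → ℂ) : Set ℂ :=
  {z : ℂ | Bornology.IsBounded (Set.range fun n : ℕ => f^[n] z)}

/-- `f` is a transcendental entire function: holomorphic on all of `ℂ` and not a polynomial. -/
def TranscendentalEntire (f : ℂ → ℂ) : Prop :=
  Differentiable ℂ f ∧ ¬∃ p : Polynomial ℂ, ∀ z, f z = p.eval z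

/-- `S` surrounds `T`: `T` lies in a bounded connected component of the complement of `S`. -/
def SurroundsSet (S T : Set ℂ) : Prop :=
  ∃ z ∈ Sᶜ, T ⊆ connectedComponentIn Sᶜ z ∧
    Bornology.IsBounded (connectedComponentIn Sᶜ z)

/-- `f` is strongly polynomial-like: there is an exhausting sequence of bounded, simply
connected domains `D n` with `closure (D n) ⊆ D (n+1)` such that `f(∂(D n))` surrounds
`closure (D n)`. -/
def StronglyPolynomialLike (f : ℂ → ℂ) : Prop :=
  ∃ D : ℕ → Set ℂ,
    (∀ n, IsOpen (D n)) ∧ (∀ n, IsConnected (D n)) ∧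
    (∀ n, Bornology.IsBounded (D n)) ∧
    (∀ n, SimplyConnectedSpace (D n)) ∧
    (∀ n, closure (D n) ⊆ D (n + 1)) ∧
    (⋃ n, D n) = Set.univ ∧
    (∀ n, SurroundsSet (f '' frontier (D n)) (closure (D n)))

/-!
`K(f)` is the increasing union of the compact sets of points whose orbit is trapped in `D n`, so
near any point of `∂K(f)` there are frontier points of some of these trapped sets. At such a point
the iterates of `f` are not uniformly bounded, so by Schottky's theorem the forward images of any
neighbourhood `V` omit at most one point. If only countably many components of `K(f)` meet `V`, then
`K(f)` has countably many components altogether. By Baire one of them contains a nonempty relatively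
clopen piece of the trapped set of `D n`; as `f` is open and maps `∂D n` off the closure of `D n`,
some iterate of this piece covers the whole trapped set, which therefore lies in a connected subset
of `K(f)`. Hence `K(f)` is connected.

Schottky's theorem follows from Bloch's: a function omitting all integers is `cosh² φ` with `φ`
holomorphic, and the image of `φ` contains no disc of radius `2`, since every such disc contains a
point where `cosh²` is an integer.
-/

section Bloch

open Metric Set

lemma exists_ball_forall_le_two_mul {X : Type*} [PseudoMetricSpace X] [ProperSpace X] {g : X → ℝ}
    {y : X} {s : ℝ} (hs : 0 ≤ s) (hg : ContinuousOn g (closedBall y s))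
    (hg0 : ∀ z ∈ closedBall y s, 0 ≤ g z) :
    ∃ a ρ, ball a ρ ⊆ closedBall y s ∧ (∀ z ∈ ball a ρ, g z ≤ 2 * g a) ∧
      g y * s ≤ 2 * (g a * ρ) := by
  -- The weight `s - dist z y` loses at most half its value at `a` on the ball chosen around `a`.
  obtain ⟨a, ha, hmax⟩ := (isCompact_closedBall y s).exists_isMaxOn
    ⟨y, mem_closedBall_self hs⟩ (hg.mul (g := fun z ↦ s - dist z y) (by fun_prop))
  have hweight : g a * (s - dist a y) = 2 * (g a * ((s - dist a y) / 2)) := by ring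
  have hball : ball a ((s - dist a y) / 2) ⊆ closedBall y s :=
    ball_subset_closedBall.trans (closedBall_subset_closedBall' (by linarith [mem_closedBall.1 ha]))
  refine ⟨a, (s - dist a y) / 2, hball, fun z hz ↦ ?_, ?_⟩
  · have hdist : (s - dist a y) / 2 ≤ s - dist z y := by
      linarith [dist_triangle z a y, mem_ball.1 hz]
    have hle : g z * ((s - dist a y) / 2) ≤ 2 * g a * ((s - dist a y) / 2) :=
      calc g z * ((s - dist a y) / 2) ≤ g z * (s - dist z y) :=
            mul_le_mul_of_nonneg_left hdist (hg0 z (hball hz))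
        _ ≤ g a * (s - dist a y) := hmax (hball hz)
        _ = 2 * g a * ((s - dist a y) / 2) := by ring
    exact le_of_mul_le_mul_right hle (pos_of_mem_ball hz)
  · have hy : g y * (s - dist y y) ≤ g a * (s - dist a y) := hmax (mem_closedBall_self hs)
    rw [dist_self, sub_zero] at hy
    exact hy.trans_eq hweight

lemma ball_subset_image_closedBall_of_norm_deriv_sub_le {h : ℂ → ℂ} {a : ℂ} {r : ℝ} (hr : 0 < r)
    (hh : ∀ z ∈ closedBall a r, DifferentiableAt ℂ h z)
    (hderiv : ∀ z ∈ closedBall a r, ‖deriv h z - deriv h a‖ ≤ ‖deriv h a‖ / 2) :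
    ball (h a) (‖deriv h a‖ * r / 4) ⊆ h '' closedBall a r := by
  rcases (norm_nonneg (deriv h a)).eq_or_lt with h0 | hpos
  · simp [← h0]
  have ha : a ∈ closedBall a r := mem_closedBall_self hr.le
  have hlinear (z) (hz : z ∈ closedBall a r) :
      ‖(h z - deriv h a * z) - (h a - deriv h a * a)‖ ≤ ‖deriv h a‖ / 2 * ‖z - a‖ := by
    refine (convex_closedBall a r).norm_image_sub_le_of_norm_hasDerivWithin_le
      (f := fun z ↦ h z - deriv h a * z) (fun w hw ↦ ?_) hderiv ha hz
    have hsub := (hh w hw).hasDerivAt.fun_sub ((hasDerivAt_id' w).const_mul (deriv h a))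
    rw [mul_one] at hsub
    exact hsub.hasDerivWithinAt
  have hlower (z) (hz : z ∈ sphere a r) : ‖deriv h a‖ * r / 2 ≤ ‖h z - h a‖ := by
    have hz' := hlinear z (sphere_subset_closedBall hz)
    have htri := norm_sub_le (h z - h a) ((h z - deriv h a * z) - (h a - deriv h a * a))
    rw [show h z - h a - ((h z - deriv h a * z) - (h a - deriv h a * a)) = deriv h a * (z - a)
      by ring, norm_mul] at htri
    rw [mem_sphere_iff_norm.1 hz] at hz' htri
    linarith
  have hcl : DiffContOnCl ℂ h (ball a r) := by
    refine DifferentiableOn.diffContOnCl fun z hz ↦ (hh z ?_).differentiableWithinAt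
    rwa [closure_ball _ hr.ne'] at hz
  have hfreq : ∃ᶠ z in 𝓝 a, h z ≠ h a :=
    ((hh a ha).hasDerivAt.eventually_ne (norm_pos_iff.1 hpos)).frequently.filter_mono
      nhdsWithin_le_nhds
  have hcover := hcl.ball_subset_image_closedBall hr hlower hfreq
  rwa [show ‖deriv h a‖ * r / 2 / 2 = ‖deriv h a‖ * r / 4 by ring] at hcover

lemma ball_subset_image_ball_of_norm_deriv_le_two_mul {h : ℂ → ℂ} {a : ℂ} {ρ : ℝ}
    (hh : DifferentiableOn ℂ h (ball a ρ))
    (hderiv : ∀ z ∈ ball a ρ, ‖deriv h z‖ ≤ 2 * ‖deriv h a‖) :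
    ball (h a) (‖deriv h a‖ * ρ / 32) ⊆ h '' ball a ρ := by
  rcases le_or_gt ρ 0 with hρ | hρ
  · rw [ball_eq_empty.2 (by nlinarith [norm_nonneg (deriv h a)])]
    exact empty_subset _
  have hsub : closedBall a (ρ / 8) ⊆ ball a ρ := closedBall_subset_ball (by linarith)
  have hmaps : MapsTo (deriv h) (ball a ρ) (closedBall (deriv h a) (4 * ‖deriv h a‖)) :=
    fun z hz ↦ mem_closedBall_iff_norm.2 <| by
      linarith [norm_sub_le (deriv h z) (deriv h a), hderiv z hz, norm_nonneg (deriv h a)]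
  have hsmall (z) (hz : z ∈ closedBall a (ρ / 8)) :
      ‖deriv h z - deriv h a‖ ≤ ‖deriv h a‖ / 2 :=
    calc ‖deriv h z - deriv h a‖ = dist (deriv h z) (deriv h a) := (dist_eq_norm _ _).symm
      _ ≤ 4 * ‖deriv h a‖ / ρ * dist z a :=
        Complex.dist_le_div_mul_dist_of_mapsTo_ball (hh.deriv isOpen_ball) hmaps (hsub hz)
      _ ≤ 4 * ‖deriv h a‖ / ρ * (ρ / 8) := by gcongr; exact hz
      _ = ‖deriv h a‖ / 2 := by field_simp; ring
  have hcover := ball_subset_image_closedBall_of_norm_deriv_sub_le (by positivity)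
    (fun z hz ↦ hh.differentiableAt (isOpen_ball.mem_nhds (hsub hz))) hsmall
  rw [show ‖deriv h a‖ * (ρ / 8) / 4 = ‖deriv h a‖ * ρ / 32 by ring] at hcover
  exact hcover.trans (image_mono hsub)

lemma bloch {h : ℂ → ℂ} {x : ℂ} {R : ℝ} (hR : 0 < R) (hh : DifferentiableOn ℂ h (ball x R)) :
    ∃ w, ball w (‖deriv h x‖ * R / 128) ⊆ h '' ball x R := by
  have hsub : closedBall x (R / 2) ⊆ ball x R := closedBall_subset_ball (by linarith)
  obtain ⟨a, ρ, haρ, hderiv, hlarge⟩ := exists_ball_forall_le_two_mul (by positivity)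
    ((hh.deriv isOpen_ball).continuousOn.mono hsub).norm (fun _ _ ↦ norm_nonneg _)
  refine ⟨h a, (ball_subset_ball ?_).trans <|
    (ball_subset_image_ball_of_norm_deriv_le_two_mul (hh.mono (haρ.trans hsub)) hderiv).trans <|
    image_mono (haρ.trans hsub)⟩
  linarith

lemma norm_deriv_le_of_forall_not_ball_subset_image {h : ℂ → ℂ} {x : ℂ} {r R : ℝ} (hR : 0 < R)
    (hh : DifferentiableOn ℂ h (ball x R)) (hr : ∀ w, ¬ ball w r ⊆ h '' ball x R) :
    ‖deriv h x‖ ≤ 128 * r / R := by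
  by_contra! hlt
  obtain ⟨w, hw⟩ := bloch hR hh
  rw [div_lt_iff₀ hR] at hlt
  exact hr w ((ball_subset_ball (by linarith)).trans hw)

lemma norm_sub_le_of_forall_not_ball_subset_image {h : ℂ → ℂ} {x : ℂ} {r R : ℝ}
    (hh : DifferentiableOn ℂ h (ball x R)) (hr : ∀ w, ¬ ball w r ⊆ h '' ball x R) {z : ℂ}
    (hz : z ∈ ball x (R / 2)) : ‖h z - h x‖ ≤ 128 * r := by
  have hR : 0 < R / 2 := pos_of_mem_ball hz
  have hr0 : 0 < r := by
    by_contra! hle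
    exact hr 0 ((ball_eq_empty.2 hle).trans_subset (empty_subset _))
  have hsub (y) (hy : y ∈ ball x (R / 2)) : ball y (R / 2) ⊆ ball x R :=
    ball_subset_ball' (by linarith [mem_ball.1 hy])
  have hderiv (y) (hy : y ∈ ball x (R / 2)) : ‖deriv h y‖ ≤ 128 * r / (R / 2) :=
    norm_deriv_le_of_forall_not_ball_subset_image hR (hh.mono (hsub y hy))
      fun w hw ↦ hr w (hw.trans (image_mono (hsub y hy)))
  calc ‖h z - h x‖ ≤ 128 * r / (R / 2) * ‖z - x‖ :=
        (convex_ball x (R / 2)).norm_image_sub_le_of_norm_deriv_le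
          (fun y hy ↦ hh.differentiableAt (isOpen_ball.mem_nhds (hsub y hy (mem_ball_self hR))))
          hderiv (mem_ball_self hR) hz
    _ ≤ 128 * r / (R / 2) * (R / 2) := by gcongr; exact (mem_ball_iff_norm.1 hz).le
    _ = 128 * r := div_mul_cancel₀ _ hR.ne'

end Bloch

section Schottky

open Metric Set

lemma exists_real_cosh_sq_eq_intCast (x : ℝ) :
    ∃ t, |t - x| ≤ 1 ∧ ∃ n : ℤ, Real.cosh t ^ 2 = n := by
  wlog hx : 0 ≤ x generalizing x
  · obtain ⟨t, ht, n, hn⟩ := this (-x) (by linarith)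
    exact ⟨-t, by rwa [neg_sub_left, abs_neg, add_comm, ← sub_neg_eq_add], n,
      by rwa [Real.cosh_neg]⟩
  have hcosh_one : 2 ≤ Real.cosh 1 ^ 2 := by
    rw [Real.cosh_sq]
    nlinarith [Real.self_le_sinh_iff.2 zero_le_one]
  have hmul : Real.cosh x * Real.cosh 1 ≤ Real.cosh (x + 1) := by
    rw [Real.cosh_add]
    exact le_add_of_nonneg_right
      (mul_nonneg (Real.sinh_nonneg_iff.2 hx) (Real.sinh_nonneg_iff.2 zero_le_one))
  have hgrowth : Real.cosh x ^ 2 + 1 ≤ Real.cosh (x + 1) ^ 2 :=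
    calc Real.cosh x ^ 2 + 1 ≤ Real.cosh x ^ 2 * 2 := by nlinarith [Real.one_le_cosh x]
      _ ≤ Real.cosh x ^ 2 * Real.cosh 1 ^ 2 := by gcongr
      _ = (Real.cosh x * Real.cosh 1) ^ 2 := by ring
      _ ≤ Real.cosh (x + 1) ^ 2 := by gcongr
  obtain ⟨t, ⟨hxt, htx⟩, ht⟩ := intermediate_value_Icc (by linarith : x ≤ x + 1)
    (Real.continuous_cosh.pow 2).continuousOn
    (show (⌈Real.cosh x ^ 2⌉ : ℝ) ∈ _ from
      ⟨Int.le_ceil _, (Int.ceil_lt_add_one _).le.trans hgrowth⟩)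
  exact ⟨t, by rw [abs_le]; constructor <;> linarith, _, ht⟩

lemma exists_int_abs_mul_sub_le {p : ℝ} (hp : 0 < p) (y : ℝ) :
    ∃ m : ℤ, |m * p - y| ≤ p / 2 := by
  refine ⟨round (y / p), ?_⟩
  calc |round (y / p) * p - y| = |y / p - round (y / p)| * |p| := by
        rw [← abs_mul, sub_mul, div_mul_cancel₀ _ hp.ne', abs_sub_comm]
    _ ≤ 1 / 2 * p := by
        rw [abs_of_pos hp]
        gcongr
        exact abs_sub_round _
    _ = p / 2 := by ring

lemma cosh_sq_add_int_mul_pi_mul_I (z : ℂ) (m : ℤ) :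
    Complex.cosh (z + m * Real.pi * Complex.I) ^ 2 = Complex.cosh z ^ 2 := by
  rw [Complex.cosh_add, Complex.cosh_mul_I, Complex.sinh_mul_I, Complex.sin_int_mul_pi, zero_mul,
    mul_zero, add_zero, mul_pow, Complex.cos_sq', Complex.sin_int_mul_pi]
  ring

lemma exists_mem_ball_cosh_sq_eq_intCast (w : ℂ) :
    ∃ v ∈ ball w 2, ∃ n : ℤ, Complex.cosh v ^ 2 = n := by
  obtain ⟨t, ht, n, hn⟩ := exists_real_cosh_sq_eq_intCast w.re
  obtain ⟨m, hm⟩ := exists_int_abs_mul_sub_le Real.pi_pos w.im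
  refine ⟨t + m * Real.pi * Complex.I, ?_, n, ?_⟩
  · have hre : ((t + m * Real.pi * Complex.I : ℂ) - w).re = t - w.re := by simp
    have him : ((t + m * Real.pi * Complex.I : ℂ) - w).im = m * Real.pi - w.im := by simp
    rw [mem_ball_iff_norm, ← sq_lt_sq₀ (norm_nonneg _) zero_le_two, Complex.sq_norm,
      Complex.normSq_apply, hre, him]
    nlinarith [sq_le_sq' (abs_le.1 ht).1 (abs_le.1 ht).2,
      sq_le_sq' (abs_le.1 hm).1 (abs_le.1 hm).2, Real.pi_lt_d2, Real.pi_pos]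
  · rw [cosh_sq_add_int_mul_pi_mul_I]
    exact_mod_cast congrArg ((↑) : ℝ → ℂ) hn

lemma abs_re_le_norm_cosh (z : ℂ) : |z.re| ≤ ‖Complex.cosh z‖ :=
  calc |z.re| ≤ |Real.sinh z.re| := by
        rw [Real.abs_sinh]
        exact Real.self_le_sinh_iff.2 (abs_nonneg _)
    _ = |‖Complex.exp z‖ - ‖-Complex.exp (-z)‖| / 2 := by
        rw [norm_neg, Complex.norm_exp, Complex.norm_exp, Complex.neg_re, Real.sinh_eq, abs_div,
          abs_two]
    _ ≤ ‖Complex.exp z - -Complex.exp (-z)‖ / 2 := by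
        gcongr
        exact abs_norm_sub_norm_le _ _
    _ = ‖Complex.cosh z‖ := by
        rw [sub_neg_eq_add, ← Complex.two_cosh, norm_mul, Complex.norm_two,
          mul_div_cancel_left₀ _ two_ne_zero]

lemma norm_cosh_le_exp_abs_re (z : ℂ) : ‖Complex.cosh z‖ ≤ Real.exp |z.re| :=
  calc ‖Complex.cosh z‖ = ‖Complex.exp z + Complex.exp (-z)‖ / 2 := by
        rw [← Complex.two_cosh, norm_mul, Complex.norm_two, mul_div_cancel_left₀ _ two_ne_zero]
    _ ≤ (Real.exp z.re + Real.exp (-z.re)) / 2 := by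
        gcongr
        refine (norm_add_le _ _).trans_eq ?_
        rw [Complex.norm_exp, Complex.norm_exp, Complex.neg_re]
    _ ≤ (Real.exp |z.re| + Real.exp |z.re|) / 2 := by
        gcongr
        exacts [le_abs_self _, neg_le_abs _]
    _ = Real.exp |z.re| := add_self_div_two _

lemma exists_differentiableOn_exp_eq {U : Set ℂ} (hU : IsSimplyConnected U) (hUo : IsOpen U)
    {g : ℂ → ℂ} (hg : DifferentiableOn ℂ g U) (hg0 : ∀ z ∈ U, g z ≠ 0) :
    ∃ l : ℂ → ℂ, DifferentiableOn ℂ l U ∧ ∀ z ∈ U, Complex.exp (l z) = g z := by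
  obtain ⟨l, hlc, hl⟩ := Complex.exists_continuousOn_eqOn_exp_comp hU hUo hg.continuousOn
    (fun ⟨z, hz, h0⟩ ↦ hg0 z hz h0)
  refine ⟨l, fun a ha ↦ DifferentiableAt.differentiableWithinAt ?_, fun z hz ↦ hl hz⟩
  have hUa : U ∈ 𝓝 a := hUo.mem_nhds ha
  exact (HasDerivAt.of_comp_left (hlc.continuousAt hUa) (Complex.hasDerivAt_exp (l a))
    (hg.differentiableAt hUa).hasDerivAt (Complex.exp_ne_zero _)
    (hl.eventuallyEq_of_mem hUa)).differentiableAt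

lemma exists_differentiableOn_cosh_sq_eq {U : Set ℂ} (hU : IsSimplyConnected U) (hUo : IsOpen U)
    {g : ℂ → ℂ} (hg : DifferentiableOn ℂ g U) (hg0 : ∀ z ∈ U, g z ≠ 0) (hg1 : ∀ z ∈ U, g z ≠ 1) :
    ∃ φ : ℂ → ℂ, DifferentiableOn ℂ φ U ∧ ∀ z ∈ U, Complex.cosh (φ z) ^ 2 = g z := by
  obtain ⟨l, hl, hlg⟩ := exists_differentiableOn_exp_eq hU hUo hg hg0
  obtain ⟨m, hm, hmg⟩ := exists_differentiableOn_exp_eq hU hUo (hg.sub_const 1)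
    fun z hz ↦ sub_ne_zero.2 (hg1 z hz)
  have hsq (w : ℂ) : Complex.exp (w / 2) ^ 2 = Complex.exp w := by
    rw [← Complex.exp_nat_mul]; congr 1; push_cast; ring
  have hprod (z) (hz : z ∈ U) : (Complex.exp (l z / 2) - Complex.exp (m z / 2)) *
      (Complex.exp (l z / 2) + Complex.exp (m z / 2)) = 1 := by
    linear_combination hsq (l z) - hsq (m z) + hlg z hz - hmg z hz
  obtain ⟨φ, hφ, hφg⟩ := exists_differentiableOn_exp_eq hU hUo
    (g := fun z ↦ Complex.exp (l z / 2) - Complex.exp (m z / 2))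
    ((hl.div_const 2).cexp.sub (hm.div_const 2).cexp)
    fun z hz ↦ left_ne_zero_of_mul_eq_one (hprod z hz)
  refine ⟨φ, hφ, fun z hz ↦ ?_⟩
  -- `e^φ = √g - √(g - 1)` has inverse `√g + √(g - 1)`, so `cosh φ = √g`.
  have hcosh : Complex.cosh (φ z) = Complex.exp (l z / 2) := by
    rw [Complex.cosh, Complex.exp_neg, hφg z hz, inv_eq_of_mul_eq_one_right (hprod z hz)]
    ring
  rw [hcosh, hsq, hlg z hz]

lemma isSimplyConnected_of_convex {E : Type*} [AddCommGroup E] [Module ℝ E] [TopologicalSpace E]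
    [ContinuousAdd E] [ContinuousSMul ℝ E] {s : Set E} (hs : Convex ℝ s) (hne : s.Nonempty) :
    IsSimplyConnected s :=
  have := hs.contractibleSpace hne
  SimplyConnectedSpace.ofContractible s

lemma norm_le_of_forall_ne_intCast {F : ℂ → ℂ} {x : ℂ} {R : ℝ}
    (hF : DifferentiableOn ℂ F (ball x R)) (hFn : ∀ z ∈ ball x R, ∀ n : ℤ, F z ≠ n) {z : ℂ}
    (hz : z ∈ ball x (R / 2)) : ‖F z‖ ≤ Real.exp (‖F x‖ + 257) ^ 2 := by
  have hR : 0 < R / 2 := pos_of_mem_ball hz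
  have hx : x ∈ ball x R := mem_ball_self (by linarith)
  have hzR : z ∈ ball x R := ball_subset_ball (by linarith) hz
  obtain ⟨φ, hφ, hφF⟩ := exists_differentiableOn_cosh_sq_eq
    (isSimplyConnected_of_convex (convex_ball x R) ⟨x, hx⟩) isOpen_ball hF
    (fun w hw ↦ mod_cast hFn w hw 0) (fun w hw ↦ mod_cast hFn w hw 1)
  have hmiss (w) : ¬ ball w 2 ⊆ φ '' ball x R := fun hsub ↦ by
    obtain ⟨v, hv, n, hn⟩ := exists_mem_ball_cosh_sq_eq_intCast w
    obtain ⟨y, hy, rfl⟩ := hsub hv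
    exact hFn y hy n ((hφF y hy).symm.trans hn)
  have hφx : |(φ x).re| ≤ 1 + ‖F x‖ := by
    have hsq : ‖Complex.cosh (φ x)‖ ^ 2 = ‖F x‖ := by rw [← norm_pow, hφF x hx]
    nlinarith [abs_re_le_norm_cosh (φ x), norm_nonneg (F x)]
  have hφz : |(φ z).re| ≤ ‖F x‖ + 257 :=
    calc |(φ z).re| ≤ |(φ x).re| + |(φ z - φ x).re| := by
          rw [Complex.sub_re, ← sub_le_iff_le_add']
          exact abs_sub_abs_le_abs_sub _ _
      _ ≤ (1 + ‖F x‖) + 128 * 2 := add_le_add hφx <| (Complex.abs_re_le_norm _).trans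
          (norm_sub_le_of_forall_not_ball_subset_image hφ hmiss hz)
      _ = ‖F x‖ + 257 := by ring
  calc ‖F z‖ = ‖Complex.cosh (φ z)‖ ^ 2 := by rw [← norm_pow, hφF z hzR]
    _ ≤ Real.exp (‖F x‖ + 257) ^ 2 := by
      gcongr
      exact (norm_cosh_le_exp_abs_re _).trans (Real.exp_le_exp.2 hφz)

lemma norm_log_le (w : ℂ) : ‖Complex.log w‖ ≤ |Real.log ‖w‖| + Real.pi :=
  calc ‖Complex.log w‖ ≤ |(Complex.log w).re| + |(Complex.log w).im| :=
        Complex.norm_le_abs_re_add_abs_im _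
    _ ≤ |Real.log ‖w‖| + Real.pi := by
      rw [Complex.log_re, Complex.log_im]
      gcongr
      exact Complex.abs_arg_le_pi w

lemma norm_le_of_forall_ne_zero_of_forall_ne_one {f : ℂ → ℂ} {x : ℂ} {R : ℝ}
    (hf : DifferentiableOn ℂ f (ball x R)) (hf0 : ∀ z ∈ ball x R, f z ≠ 0)
    (hf1 : ∀ z ∈ ball x R, f z ≠ 1) {z : ℂ} (hz : z ∈ ball x (R / 2)) :
    ‖f z‖ ≤ Real.exp (2 * Real.pi * Real.exp (|Real.log ‖f x‖| + 258) ^ 2) := by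
  have hR : 0 < R / 2 := pos_of_mem_ball hz
  have hx : x ∈ ball x R := mem_ball_self (by linarith)
  have hpi : ‖(2 * Real.pi * Complex.I : ℂ)‖ = 2 * Real.pi := by
    rw [norm_mul, norm_mul, Complex.norm_I, mul_one, Complex.norm_two, Complex.norm_real,
      Real.norm_of_nonneg Real.pi_pos.le]
  obtain ⟨l, hl, hlf⟩ := exists_differentiableOn_exp_eq
    (isSimplyConnected_of_convex (convex_ball x R) ⟨x, hx⟩) isOpen_ball hf hf0
  let F : ℂ → ℂ := fun y ↦ (l y - l x + Complex.log (f x)) / (2 * Real.pi * Complex.I)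
  have hexp (y) (hy : y ∈ ball x R) : Complex.exp (2 * Real.pi * Complex.I * F y) = f y := by
    rw [mul_div_cancel₀ _ Complex.two_pi_I_ne_zero, Complex.exp_add, Complex.exp_sub,
      Complex.exp_log (hf0 x hx), hlf x hx, hlf y hy, div_mul_cancel₀ _ (hf0 x hx)]
  have hFn (y) (hy : y ∈ ball x R) (n : ℤ) : F y ≠ n := fun h ↦ hf1 y hy <| by
    rw [← hexp y hy, h, mul_comm, Complex.exp_int_mul_two_pi_mul_I]
  have hFx : ‖F x‖ ≤ |Real.log ‖f x‖| + 1 := by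
    rw [norm_div, hpi, sub_self, zero_add, div_le_iff₀ Real.two_pi_pos]
    nlinarith [norm_log_le (f x), Real.pi_gt_three, abs_nonneg (Real.log ‖f x‖)]
  calc ‖f z‖ = ‖Complex.exp (2 * Real.pi * Complex.I * F z)‖ := by
        rw [hexp z (ball_subset_ball (by linarith) hz)]
    _ ≤ Real.exp (2 * Real.pi * ‖F z‖) := by
        rw [← hpi, ← norm_mul]
        exact Complex.norm_exp_le_exp_norm _
    _ ≤ Real.exp (2 * Real.pi * Real.exp (|Real.log ‖f x‖| + 258) ^ 2) := by
        gcongr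
        refine (norm_le_of_forall_ne_intCast ?_ hFn hz).trans ?_
        · exact ((hl.sub_const _).add_const _).div_const _
        · gcongr Real.exp ?_ ^ 2
          linarith

lemma schottky_zero_one (M : ℝ) :
    ∃ B, ∀ (f : ℂ → ℂ) (x : ℂ) (R : ℝ), DifferentiableOn ℂ f (ball x R) →
      (∀ z ∈ ball x R, f z ≠ 0) → (∀ z ∈ ball x R, f z ≠ 1) → ‖f x‖ ≤ M →
      ∀ z ∈ ball x (R / 2), ‖f z‖ ≤ B := by
  have hlog {t : ℝ} (ht : 1 / 2 ≤ t) (htM : t ≤ 1 + M) : |Real.log t| ≤ M + 2 := by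
    have ht0 : 0 < t := by linarith
    have hinv : t⁻¹ ≤ 2 := inv_le_of_inv_le₀ two_pos (by linarith)
    rw [abs_le]
    constructor <;> linarith [Real.log_le_sub_one_of_pos ht0, Real.one_sub_inv_le_log_of_pos ht0]
  set B := Real.exp (2 * Real.pi * Real.exp (M + 2 + 258) ^ 2)
  have hB {f : ℂ → ℂ} {x : ℂ} {R : ℝ} (hf : DifferentiableOn ℂ f (ball x R))
      (hf0 : ∀ z ∈ ball x R, f z ≠ 0) (hf1 : ∀ z ∈ ball x R, f z ≠ 1) (hx : 1 / 2 ≤ ‖f x‖)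
      (hxM : ‖f x‖ ≤ 1 + M) (z) (hz : z ∈ ball x (R / 2)) : ‖f z‖ ≤ B := by
    refine (norm_le_of_forall_ne_zero_of_forall_ne_one hf hf0 hf1 hz).trans ?_
    dsimp only [B]
    gcongr
    exact hlog hx hxM
  refine ⟨B + 1, fun f x R hf hf0 hf1 hM z hz ↦ ?_⟩
  rcases le_or_gt (1 / 2) ‖f x‖ with hx | hx
  · linarith [hB hf hf0 hf1 hx (by linarith) z hz]
  · have hbound := hB (f := fun z ↦ 1 - f z) (hf.const_sub 1)
      (fun z hz ↦ sub_ne_zero.2 (hf1 z hz).symm) (fun z hz h ↦ hf0 z hz (by simpa using h))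
      (by linarith [norm_sub_norm_le 1 (f x), norm_one (α := ℂ)])
      (by linarith [norm_sub_le 1 (f x), norm_one (α := ℂ)]) z hz
    linarith [norm_sub_norm_le (f z) 1, norm_sub_rev (f z) 1, norm_one (α := ℂ)]

lemma schottky {a b : ℂ} (hab : a ≠ b) (M : ℝ) :
    ∃ B, ∀ (f : ℂ → ℂ) (x : ℂ) (R : ℝ), DifferentiableOn ℂ f (ball x R) →
      (∀ z ∈ ball x R, f z ≠ a) → (∀ z ∈ ball x R, f z ≠ b) → ‖f x‖ ≤ M →
      ∀ z ∈ ball x (R / 2), ‖f z‖ ≤ B := by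
  have hba : b - a ≠ 0 := sub_ne_zero.2 hab.symm
  obtain ⟨B, hB⟩ := schottky_zero_one ((M + ‖a‖) / ‖b - a‖)
  refine ⟨B * ‖b - a‖ + ‖a‖, fun f x R hf hfa hfb hM z hz ↦ ?_⟩
  have hbound := hB (fun z ↦ (f z - a) / (b - a)) x R ((hf.sub_const a).div_const _)
    (fun z hz ↦ div_ne_zero (sub_ne_zero.2 (hfa z hz)) hba)
    (fun z hz h ↦ hfb z hz (sub_left_injective ((div_eq_one_iff_eq hba).1 h)))
    (by rw [norm_div]; gcongr; exact (norm_sub_le _ _).trans (by gcongr)) z hz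
  rw [norm_div, div_le_iff₀ (norm_pos_iff.2 hba)] at hbound
  linarith [norm_sub_norm_le (f z) a]

end Schottky

section Components

open Set

variable {X : Type*} [TopologicalSpace X]

lemma frontier_iUnion_subset_closure_iUnion_frontier [LocallyConnectedSpace X] {ι : Sort*}
    (s : ι → Set X) : frontier (⋃ i, s i) ⊆ closure (⋃ i, frontier (s i)) := by
  intro z hz
  by_contra hzcl
  obtain ⟨V, hVsub, hVo, hzV, hVc⟩ := locallyConnectedSpace_iff_subsets_isOpen_isConnected.1
    ‹_› z _ (isClosed_closure.isOpen_compl.mem_nhds hzcl)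
  obtain ⟨y, hyV, hy⟩ := mem_closure_iff.1 hz.1 V hVo hzV
  obtain ⟨i, hyi⟩ := mem_iUnion.1 hy
  have hfr (w) (hw : w ∈ V) : w ∉ frontier (s i) := fun h ↦
    hVsub hw (subset_closure (mem_iUnion.2 ⟨i, h⟩))
  have hcl : closure (s i) ∩ V ⊆ interior (s i) := fun w ⟨hws, hwV⟩ ↦
    by_contra fun hwi ↦ hfr w hwV ⟨hws, hwi⟩
  have hVi : V ⊆ interior (s i) := hVc.isPreconnected.subset_of_closure_inter_subset
    isOpen_interior ⟨y, hyV, hcl ⟨subset_closure hyi, hyV⟩⟩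
    ((inter_subset_inter_left _ (closure_mono interior_subset)).trans hcl)
  exact hz.2 (mem_interior.2
    ⟨V, hVi.trans (interior_subset.trans (subset_iUnion s i)), hVo, hzV⟩)

lemma exists_isClopen_nonempty_forall_eq [CompactSpace X] [T2Space X] [Nonempty X]
    {T : Type*} [TopologicalSpace T] [TotallyDisconnectedSpace T] [Countable T]
    {g : X → T} (hg : Continuous g) : ∃ A, IsClopen A ∧ A.Nonempty ∧ ∃ t, ∀ x ∈ A, g x = t := by
  let h := hg.connectedComponentsLift
  have hh : Continuous h := hg.connectedComponentsLift_continuous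
  obtain ⟨t, c, hc⟩ := nonempty_interior_of_iUnion_of_closed
    (fun t ↦ (isClosed_singleton (x := t)).preimage hh)
    (by rw [← preimage_iUnion, iUnion_of_singleton, preimage_univ])
  obtain ⟨B, hB, hcB, hBt⟩ := compact_exists_isClopen_in_isOpen isOpen_interior hc
  obtain ⟨x, rfl⟩ := ConnectedComponents.surjective_coe c
  exact ⟨_, hB.preimage ConnectedComponents.continuous_coe, ⟨x, hcB⟩, t, fun y hy ↦
    interior_subset (s := h ⁻¹' {t}) (hBt hy)⟩

lemma isPreconnected_image_val_preimage_mk {K : Set X} (c : ConnectedComponents K) :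
    IsPreconnected (Subtype.val '' (ConnectedComponents.mk ⁻¹' {c})) := by
  obtain ⟨w, rfl⟩ := ConnectedComponents.surjective_coe c
  rw [connectedComponents_preimage_singleton]
  exact isPreconnected_connectedComponent.image _ continuous_subtype_val.continuousOn

lemma countable_image_mk_of_countable_setOf_connectedComponentIn {K V : Set X}
    (hV : {C : Set X | (∃ w ∈ K, C = connectedComponentIn K w) ∧ (C ∩ V).Nonempty}.Countable) :
    (ConnectedComponents.mk '' (Subtype.val ⁻¹' V) : Set (ConnectedComponents K)).Countable := by
  have hinj : Function.Injective fun c : ConnectedComponents K ↦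
      Subtype.val '' (ConnectedComponents.mk ⁻¹' {c}) :=
    (image_injective.2 Subtype.val_injective).comp
      (ConnectedComponents.surjective_coe.preimage_injective.comp singleton_injective)
  refine (hV.preimage hinj).mono ?_
  rintro _ ⟨w, hw, rfl⟩
  rw [mem_preimage, connectedComponents_preimage_singleton, ← connectedComponentIn_eq_image w.2]
  exact ⟨⟨w, w.2, rfl⟩, w, mem_connectedComponentIn w.2, hw⟩

lemma countable_connectedComponents_of_countable_compl_iUnion_image {f : X → X} {K V : Set X}
    (hf : Continuous f) (hK : f ⁻¹' K = K) (hcover : (⋃ k, f^[k] '' V)ᶜ.Countable)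
    (hV : (ConnectedComponents.mk '' (Subtype.val ⁻¹' V) : Set (ConnectedComponents K)).Countable) :
    Countable (ConnectedComponents K) := by
  have hpre (k : ℕ) : f^[k] ⁻¹' K = K := Function.IsFixedPt.preimage_iterate hK k
  have hmaps (k : ℕ) : MapsTo f^[k] K K := (hpre k).ge
  let Φ (k : ℕ) : ConnectedComponents K → ConnectedComponents K :=
    ((hf.iterate k).restrict (hmaps k)).connectedComponentsMap
  rw [← countable_univ_iff]
  refine ((hcover.preimage Subtype.val_injective).image ConnectedComponents.mk |>.union
    (countable_iUnion fun k ↦ hV.image (Φ k))).mono fun c _ ↦ ?_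
  obtain ⟨w, rfl⟩ := ConnectedComponents.surjective_coe c
  by_cases hw : w.1 ∈ ⋃ k, f^[k] '' V
  · obtain ⟨k, v, hvV, hvw⟩ := mem_iUnion.1 hw
    have hvK : v ∈ K := by
      rw [← hpre k, mem_preimage, hvw]
      exact w.2
    exact .inr (mem_iUnion.2 ⟨k, _, ⟨⟨v, hvK⟩, hvV, rfl⟩,
      congrArg ConnectedComponents.mk (Subtype.ext hvw)⟩)
  · exact .inl ⟨w, hw, rfl⟩

lemma exists_isOpen_preimage_val_eq_of_isClopen [T2Space X] {K : Set X} (hK : IsCompact K)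
    {A : Set K} (hA : IsClopen A) :
    ∃ U, IsOpen U ∧ Subtype.val ⁻¹' U = A ∧ Disjoint (frontier U) K := by
  have := isCompact_iff_compactSpace.1 hK
  obtain ⟨U, V, hU, hV, hAU, hAV, hUV⟩ := SeparatedNhds.of_isCompact_isCompact
    (hA.isClosed.isCompact.image continuous_subtype_val)
    (hA.compl.isClosed.isCompact.image continuous_subtype_val)
    ((disjoint_image_iff Subtype.val_injective).2 disjoint_compl_right)
  have hUA (w : K) (hw : w.1 ∈ closure U) : w ∈ A := by_contra fun hwA ↦
    disjoint_left.1 (hUV.closure_left hV) hw (hAV ⟨w, hwA, rfl⟩)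
  refine ⟨U, hU, Subset.antisymm (fun w hw ↦ hUA w (subset_closure hw))
    fun w hw ↦ hAU ⟨w, hw, rfl⟩, disjoint_left.2 fun z hzU hzK ↦ ?_⟩
  rw [hU.frontier_eq] at hzU
  exact hzU.2 (hAU ⟨⟨z, hzK⟩, hUA _ hzU.1, rfl⟩)

end Components

section Trapped

open Set

/-- The set of points whose whole forward orbit under `f` stays in `D`. -/
def trappedSet {X : Type*} (f : X → X) (D : Set X) : Set X := {z | ∀ k, f^[k] z ∈ D}

/-- The set of points whose first `k` iterates under `f`, counted from the `0`-th to the `k`-th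
inclusively, stay in `s`; these sets approximate `trappedSet f s` from outside. -/
def trappedUpTo {X : Type*} (f : X → X) (s : Set X) (k : ℕ) : Set X := {z | ∀ j ≤ k, f^[j] z ∈ s}

/-- `D` is a relatively compact open set whose frontier is mapped by `f` off the closure of `D`.
This is what the proof uses of a polynomial-like restriction `f : D → f(D)`. -/
structure HasEscapingFrontier {X : Type*} [TopologicalSpace X] (f : X → X) (D : Set X) : Prop where
  isOpen : IsOpen D
  isCompact_closure : IsCompact (closure D)
  mapsTo_frontier : MapsTo f (frontier D) (closure D)ᶜ

/-- An increasing exhaustion of the space by preconnected sets with escaping frontier: the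
topological content of being strongly polynomial-like. -/
structure IsEscapingExhaustion {X : Type*} [TopologicalSpace X] (f : X → X) (D : ℕ → Set X) :
    Prop where
  hasEscapingFrontier (n : ℕ) : HasEscapingFrontier f (D n)
  isPreconnected (n : ℕ) : IsPreconnected (D n)
  monotone : Monotone D
  iUnion_eq_univ : ⋃ n, D n = univ

section Sets

variable {X : Type*} {f : X → X} {D : Set X} {k : ℕ} {z : X}

lemma antitone_trappedUpTo : Antitone (trappedUpTo f D) :=
  fun _ _ hkl _ hz j hj ↦ hz j (hj.trans hkl)

lemma trappedUpTo_mono {s t : Set X} (hst : s ⊆ t) : trappedUpTo f s k ⊆ trappedUpTo f t k :=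
  fun _ hz j hj ↦ hst (hz j hj)

lemma trappedSet_mono {s t : Set X} (hst : s ⊆ t) : trappedSet f s ⊆ trappedSet f t :=
  fun _ hz k ↦ hst (hz k)

lemma mem_trappedUpTo_succ (hz : z ∈ trappedUpTo f D k) (hzk : f^[k + 1] z ∈ D) :
    z ∈ trappedUpTo f D (k + 1) := fun j hj ↦ by
  rcases Nat.le_succ_iff.1 hj with hj | rfl
  exacts [hz j hj, hzk]

lemma iterate_mem_trappedSet (hz : z ∈ trappedSet f D) (k : ℕ) : f^[k] z ∈ trappedSet f D :=
  fun j ↦ by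
    rw [← Function.iterate_add_apply]
    exact hz _

lemma mem_trappedSet_of_iterate_mem (hz : z ∈ trappedUpTo f D k)
    (hzk : f^[k] z ∈ trappedSet f D) : z ∈ trappedSet f D := fun j ↦ by
  rcases le_total j k with hjk | hkj
  · exact hz j hjk
  · rw [← Nat.sub_add_cancel hkj, Function.iterate_add_apply]
    exact hzk (j - k)

lemma trappedUpTo_eq_biInter : trappedUpTo f D k = ⋂ j ∈ Iic k, f^[j] ⁻¹' D := by
  ext z
  simp only [trappedUpTo, mem_ofPred_eq, mem_iInter, mem_Iic, mem_preimage]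

end Sets

variable {X : Type*} [TopologicalSpace X] {f : X → X}

lemma isOpenMap_iterate (hf : IsOpenMap f) : ∀ k, IsOpenMap f^[k]
  | 0 => IsOpenMap.id
  | k + 1 => (isOpenMap_iterate hf k).comp hf

lemma isOpen_trappedUpTo (hf : Continuous f) {s : Set X} (hs : IsOpen s) (k : ℕ) :
    IsOpen (trappedUpTo f s k) := by
  rw [trappedUpTo_eq_biInter]
  exact (finite_Iic k).isOpen_biInter fun j _ ↦ hs.preimage (hf.iterate j)

lemma isClosed_trappedUpTo (hf : Continuous f) {s : Set X} (hs : IsClosed s) (k : ℕ) :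
    IsClosed (trappedUpTo f s k) := by
  rw [trappedUpTo_eq_biInter]
  exact isClosed_biInter fun j _ ↦ hs.preimage (hf.iterate j)

namespace HasEscapingFrontier

variable {D : Set X} {k : ℕ}

lemma mem_of_mem_closure (hD : HasEscapingFrontier f D) {z : X} (hz : z ∈ closure D)
    (hfz : f z ∈ closure D) : z ∈ D := by
  by_contra hzD
  exact hD.mapsTo_frontier (by rw [hD.isOpen.frontier_eq]; exact ⟨hz, hzD⟩) hfz

lemma mem_trappedUpTo (hD : HasEscapingFrontier f D) {z : X}
    (hz : z ∈ trappedUpTo f (closure D) k) (hzk : f^[k] z ∈ D) : z ∈ trappedUpTo f D k := by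
  intro j hj
  rcases hj.eq_or_lt with rfl | hjk
  · exact hzk
  · refine hD.mem_of_mem_closure (hz j hj) ?_
    rw [← Function.iterate_succ_apply' f]
    exact hz _ hjk

lemma trappedSet_eq_iInter (hD : HasEscapingFrontier f D) :
    trappedSet f D = ⋂ k, trappedUpTo f (closure D) k := by
  refine subset_antisymm (subset_iInter fun k z hz j _ ↦ subset_closure (hz j))
    fun z hz k ↦ ?_
  have hzcl (j : ℕ) : f^[j] z ∈ closure D := mem_iInter.1 hz j j le_rfl
  refine hD.mem_of_mem_closure (hzcl k) ?_
  rw [← Function.iterate_succ_apply' f]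
  exact hzcl (k + 1)

lemma isCompact_trappedUpTo_closure (hD : HasEscapingFrontier f D) (hf : Continuous f) (k : ℕ) :
    IsCompact (trappedUpTo f (closure D) k) :=
  hD.isCompact_closure.of_isClosed_subset (isClosed_trappedUpTo hf isClosed_closure k)
    fun _ hz ↦ hz 0 k.zero_le

lemma isClosed_trappedSet (hD : HasEscapingFrontier f D) (hf : Continuous f) :
    IsClosed (trappedSet f D) := by
  rw [hD.trappedSet_eq_iInter]
  exact isClosed_iInter fun k ↦ isClosed_trappedUpTo hf isClosed_closure k

lemma isCompact_trappedSet (hD : HasEscapingFrontier f D) (hf : Continuous f) :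
    IsCompact (trappedSet f D) :=
  hD.isCompact_closure.of_isClosed_subset (hD.isClosed_trappedSet hf)
    fun _ hz ↦ subset_closure (hz 0)

lemma subset_image_iterate [T2Space X] (hD : HasEscapingFrontier f D) (hf : Continuous f)
    (hfo : IsOpenMap f) (hDc : IsPreconnected D) {U : Set X} (hU : IsOpen U)
    (hfr : Disjoint (frontier U) (trappedUpTo f (closure D) k))
    (hne : (U ∩ trappedUpTo f D k).Nonempty) : D ⊆ f^[k] '' (U ∩ trappedUpTo f D k) := by
  have hopen : IsOpen (f^[k] '' (U ∩ trappedUpTo f D k)) :=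
    isOpenMap_iterate hfo k _ (hU.inter (isOpen_trappedUpTo hf hD.isOpen k))
  have hclosed : IsClosed (f^[k] '' (closure U ∩ trappedUpTo f (closure D) k)) :=
    (((hD.isCompact_trappedUpTo_closure hf k).inter_left isClosed_closure).image
      (hf.iterate k)).isClosed
  -- So the image is relatively closed in `D`: an orbit reaching `D` after `k` steps cannot have
  -- passed through `frontier D`.
  have hclosure : closure (f^[k] '' (U ∩ trappedUpTo f D k)) ⊆
      f^[k] '' (closure U ∩ trappedUpTo f (closure D) k) :=
    closure_minimal (image_mono (inter_subset_inter subset_closure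
      (trappedUpTo_mono subset_closure))) hclosed
  obtain ⟨z, hz⟩ := hne
  refine hDc.subset_of_closure_inter_subset hopen ⟨f^[k] z, hz.2 k le_rfl, z, hz, rfl⟩ ?_
  rintro w ⟨hw, hwD⟩
  obtain ⟨y, ⟨hyU, hy⟩, rfl⟩ := hclosure hw
  refine ⟨y, ⟨by_contra fun hyU' ↦ disjoint_left.1 hfr ?_ hy, hD.mem_trappedUpTo hy hwD⟩, rfl⟩
  rw [hU.frontier_eq]
  exact ⟨hyU, hyU'⟩

lemma nonempty_trappedSet [T2Space X] (hD : HasEscapingFrontier f D) (hf : Continuous f)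
    (hfo : IsOpenMap f) (hDc : IsPreconnected D) {p : X} (hp : p ∈ D) (hfp : f p ∈ D) :
    (trappedSet f D).Nonempty := by
  have hne (k : ℕ) : (trappedUpTo f D k).Nonempty := by
    induction k with
    | zero => exact ⟨p, fun j hj ↦ by rwa [Nat.le_zero.1 hj]⟩
    | succ k ih =>
      obtain ⟨z, ⟨-, hz⟩, hzp⟩ := hD.subset_image_iterate hf hfo hDc isOpen_univ (k := k)
        (by rw [frontier_univ]; exact disjoint_bot_left) (by rwa [univ_inter]) hp
      exact ⟨z, mem_trappedUpTo_succ hz (by rwa [Function.iterate_succ_apply', hzp])⟩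
  rw [hD.trappedSet_eq_iInter]
  exact IsCompact.nonempty_iInter_of_directed_nonempty_isCompact_isClosed _
    antitone_trappedUpTo.directed_ge (fun k ↦ (hne k).mono (trappedUpTo_mono subset_closure))
    (hD.isCompact_trappedUpTo_closure hf) (isClosed_trappedUpTo hf isClosed_closure)

lemma exists_trappedUpTo_subset [T2Space X] (hD : HasEscapingFrontier f D) (hf : Continuous f)
    {W : Set X} (hW : IsOpen W) (hDW : trappedSet f D ⊆ W) :
    ∃ k, trappedUpTo f (closure D) k ⊆ W :=
  exists_subset_nhds_of_isCompact antitone_trappedUpTo.directed_ge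
    (hD.isCompact_trappedUpTo_closure hf)
    fun z hz ↦ hW.mem_nhds (hDW (by rwa [hD.trappedSet_eq_iInter]))

lemma exists_trappedSet_subset_image_iterate [T2Space X] (hD : HasEscapingFrontier f D)
    (hf : Continuous f) (hfo : IsOpenMap f) (hDc : IsPreconnected D) {A : Set (trappedSet f D)}
    (hA : IsClopen A) (hne : A.Nonempty) :
    ∃ k, trappedSet f D ⊆ f^[k] '' (Subtype.val '' A) := by
  obtain ⟨U, hU, rfl, hfr⟩ :=
    exists_isOpen_preimage_val_eq_of_isClopen (hD.isCompact_trappedSet hf) hA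
  obtain ⟨k, hk⟩ := hD.exists_trappedUpTo_subset hf isClosed_frontier.isOpen_compl
    (subset_compl_iff_disjoint_left.2 hfr)
  obtain ⟨a, ha⟩ := hne
  have hcover := hD.subset_image_iterate hf hfo hDc hU (subset_compl_iff_disjoint_left.1 hk)
    ⟨a, ha, fun j _ ↦ a.2 j⟩
  refine ⟨k, fun w hw ↦ ?_⟩
  obtain ⟨z, ⟨hzU, hz⟩, rfl⟩ := hcover (hw 0)
  exact ⟨z, ⟨⟨z, mem_trappedSet_of_iterate_mem hz hw⟩, hzU, rfl⟩, rfl⟩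

lemma exists_isPreconnected_superset_trappedSet [T2Space X] (hD : HasEscapingFrontier f D)
    (hf : Continuous f) (hfo : IsOpenMap f) (hDc : IsPreconnected D) {K : Set X}
    (hK : MapsTo f K K) [Countable (ConnectedComponents K)] (hDK : trappedSet f D ⊆ K) :
    ∃ T ⊆ K, IsPreconnected T ∧ trappedSet f D ⊆ T := by
  rcases (trappedSet f D).eq_empty_or_nonempty with hempty | hne
  · exact ⟨∅, empty_subset _, isPreconnected_empty, hempty.subset⟩
  have := hne.to_subtype
  have := isCompact_iff_compactSpace.1 (hD.isCompact_trappedSet hf)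
  obtain ⟨A, hA, hAne, c, hAc⟩ := exists_isClopen_nonempty_forall_eq
    (ConnectedComponents.continuous_coe.comp (continuous_inclusion hDK))
  obtain ⟨k, hk⟩ := hD.exists_trappedSet_subset_image_iterate hf hfo hDc hA hAne
  refine ⟨f^[k] '' (Subtype.val '' (ConnectedComponents.mk ⁻¹' {c})), ?_,
    (isPreconnected_image_val_preimage_mk c).image _ (hf.iterate k).continuousOn,
    hk.trans (image_mono ?_)⟩
  · rintro _ ⟨_, ⟨w, -, rfl⟩, rfl⟩
    exact hK.iterate k w.2
  · rintro _ ⟨w, hw, rfl⟩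
    exact ⟨inclusion hDK w, hAc w hw, rfl⟩

end HasEscapingFrontier

namespace IsEscapingExhaustion

variable {D : ℕ → Set X}

lemma exists_mem (hD : IsEscapingExhaustion f D) (z : X) : ∃ n, z ∈ D n :=
  mem_iUnion.1 (hD.iUnion_eq_univ ▸ mem_univ z)

lemma monotone_trappedSet (hD : IsEscapingExhaustion f D) : Monotone fun n ↦ trappedSet f (D n) :=
  fun _ _ hmn ↦ trappedSet_mono (hD.monotone hmn)

lemma nonempty_iUnion_trappedSet [T2Space X] [Nonempty X] (hD : IsEscapingExhaustion f D)
    (hf : Continuous f) (hfo : IsOpenMap f) : (⋃ n, trappedSet f (D n)).Nonempty := by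
  obtain ⟨p⟩ := ‹Nonempty X›
  obtain ⟨m, hm⟩ := hD.exists_mem p
  obtain ⟨n, hn⟩ := hD.exists_mem (f p)
  exact ((hD.hasEscapingFrontier (max m n)).nonempty_trappedSet hf hfo (hD.isPreconnected _)
    (hD.monotone (le_max_left m n) hm) (hD.monotone (le_max_right m n) hn)).mono
    (subset_iUnion _ _)

lemma isPreconnected_iUnion_trappedSet [T2Space X] (hD : IsEscapingExhaustion f D)
    (hf : Continuous f) (hfo : IsOpenMap f)
    [Countable (ConnectedComponents (⋃ n, trappedSet f (D n) : Set X))] :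
    IsPreconnected (⋃ n, trappedSet f (D n)) := by
  have hmaps : MapsTo f (⋃ n, trappedSet f (D n)) (⋃ n, trappedSet f (D n)) :=
    mapsTo_iUnion_iUnion fun _ _ hz ↦ iterate_mem_trappedSet hz 1
  refine isPreconnected_of_forall_pair fun x hx y hy ↦ ?_
  obtain ⟨m, hm⟩ := mem_iUnion.1 hx
  obtain ⟨n, hn⟩ := mem_iUnion.1 hy
  obtain ⟨T, hTK, hT, hsub⟩ :=
    (hD.hasEscapingFrontier (max m n)).exists_isPreconnected_superset_trappedSet hf hfo
      (hD.isPreconnected _) hmaps (subset_iUnion (fun n ↦ trappedSet f (D n)) _)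
  exact ⟨T, hTK, hsub (hD.monotone_trappedSet (le_max_left m n) hm),
    hsub (hD.monotone_trappedSet (le_max_right m n) hn), hT⟩

lemma not_forall_apply_eq [NoncompactSpace X] [PreconnectedSpace X] (hD : IsEscapingExhaustion f D)
    (c : X) : ¬ ∀ z, f z = c := by
  intro hc
  obtain ⟨n, hn⟩ := hD.exists_mem c
  have hproper : D n ≠ univ := fun h ↦ noncompact_univ X <| by
    simpa only [h, closure_univ] using (hD.hasEscapingFrontier n).isCompact_closure
  obtain ⟨z, hz⟩ := nonempty_frontier_iff.2 ⟨⟨c, hn⟩, hproper⟩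
  exact (hD.hasEscapingFrontier n).mapsTo_frontier hz (hc z ▸ subset_closure hn)

end IsEscapingExhaustion

end Trapped

section EntireDynamics

open Metric Set

variable {f : ℂ → ℂ}

lemma preimage_boundedOrbitSet (f : ℂ → ℂ) : f ⁻¹' boundedOrbitSet f = boundedOrbitSet f := by
  ext z
  have hrange : range (fun n ↦ f^[n] z) = insert z (range fun n ↦ f^[n] (f z)) :=
    (Nat.range_of_succ _).symm
  change Bornology.IsBounded (range fun n ↦ f^[n] (f z)) ↔
    Bornology.IsBounded (range fun n ↦ f^[n] z)
  rw [hrange, Bornology.isBounded_insert]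

lemma IsEscapingExhaustion.boundedOrbitSet_eq_iUnion {D : ℕ → Set ℂ}
    (hD : IsEscapingExhaustion f D) : boundedOrbitSet f = ⋃ n, trappedSet f (D n) := by
  refine Subset.antisymm (fun z hz ↦ ?_) (iUnion_subset fun n z hz ↦ ?_)
  · change Bornology.IsBounded (range fun n ↦ f^[n] z) at hz
    obtain ⟨n, hn⟩ := hz.isCompact_closure.elim_directed_cover D
      (fun n ↦ (hD.hasEscapingFrontier n).isOpen) (hD.iUnion_eq_univ ▸ subset_univ _)
      hD.monotone.directed_le
    exact mem_iUnion.2 ⟨n, fun k ↦ hn (subset_closure ⟨k, rfl⟩)⟩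
  · exact (hD.hasEscapingFrontier n).isCompact_closure.isBounded.subset
      (range_subset_iff.2 fun k ↦ subset_closure (hz k))

namespace HasEscapingFrontier

variable {D : Set ℂ} {x : ℂ}

lemma mem_interior_trappedSet_of_norm_iterate_le (hD : HasEscapingFrontier f D)
    (hf : Differentiable ℂ f) (hx : x ∈ trappedSet f D) {ρ B : ℝ} (hρ : 0 < ρ)
    (hB : ∀ k, ∀ z ∈ ball x ρ, ‖f^[k] z‖ ≤ B) : x ∈ interior (trappedSet f D) := by
  obtain ⟨δ, hδ, hδD⟩ := (hD.isCompact_trappedSet hf.continuous).exists_thickening_subset_open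
    hD.isOpen fun z hz ↦ hz 0
  obtain ⟨η, hη, hηδ⟩ := exists_pos_mul_lt hδ (2 * B / ρ)
  have hB0 : 0 ≤ B := (norm_nonneg _).trans (hB 0 x (mem_ball_self hρ))
  refine mem_interior_iff_mem_nhds.2 (mem_of_superset (ball_mem_nhds x (lt_min hρ hη))
    fun z hz k ↦ hδD (mem_thickening_iff.2 ⟨f^[k] x, iterate_mem_trappedSet hx k, ?_⟩))
  have hmaps : MapsTo f^[k] (ball x ρ) (closedBall (f^[k] x) (2 * B)) := fun y hy ↦
    mem_closedBall_iff_norm.2 <| by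
      linarith [norm_sub_le (f^[k] y) (f^[k] x), hB k y hy, hB k x (mem_ball_self hρ)]
  calc dist (f^[k] z) (f^[k] x) ≤ 2 * B / ρ * dist z x :=
        Complex.dist_le_div_mul_dist_of_mapsTo_ball (hf.iterate k).differentiableOn hmaps
          (ball_subset_ball (min_le_left _ _) hz)
    _ ≤ 2 * B / ρ * η := by gcongr; exact hz.le.trans (min_le_right _ _)
    _ < δ := hηδ

lemma mem_interior_trappedSet_of_forall_iterate_ne (hD : HasEscapingFrontier f D)
    (hf : Differentiable ℂ f) (hx : x ∈ trappedSet f D) {V : Set ℂ} (hV : V ∈ 𝓝 x) {a b : ℂ}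
    (hab : a ≠ b) (ha : ∀ k, ∀ z ∈ V, f^[k] z ≠ a) (hb : ∀ k, ∀ z ∈ V, f^[k] z ≠ b) :
    x ∈ interior (trappedSet f D) := by
  obtain ⟨R, hR, hRV⟩ := Metric.mem_nhds_iff.1 hV
  obtain ⟨M, hM⟩ := hD.isCompact_closure.isBounded.exists_norm_le
  obtain ⟨B, hB⟩ := schottky hab M
  exact hD.mem_interior_trappedSet_of_norm_iterate_le hf hx (half_pos hR) fun k ↦
    hB f^[k] x R (hf.iterate k).differentiableOn (fun z hz ↦ ha k z (hRV hz))
      (fun z hz ↦ hb k z (hRV hz)) (hM _ (subset_closure (hx k)))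

lemma subsingleton_compl_iUnion_image_iterate (hD : HasEscapingFrontier f D)
    (hf : Differentiable ℂ f) (hx : x ∈ frontier (trappedSet f D)) {V : Set ℂ} (hV : V ∈ 𝓝 x) :
    (⋃ k, f^[k] '' V)ᶜ.Subsingleton := by
  intro a ha b hb
  simp only [mem_compl_iff, mem_iUnion, mem_image, not_exists, not_and] at ha hb
  by_contra hab
  exact hx.2 (hD.mem_interior_trappedSet_of_forall_iterate_ne hf
    ((hD.isClosed_trappedSet hf.continuous).frontier_subset hx) hV hab ha hb)

end HasEscapingFrontier

namespace IsEscapingExhaustion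

variable {D : ℕ → Set ℂ}

lemma isOpenMap (hD : IsEscapingExhaustion f D) (hf : Differentiable ℂ f) : IsOpenMap f :=
  (AnalyticOnNhd.is_constant_or_isOpenMap fun z _ ↦ hf.analyticAt z).resolve_left
    fun ⟨c, hc⟩ ↦ hD.not_forall_apply_eq c hc

lemma countable_connectedComponents (hD : IsEscapingExhaustion f D) (hf : Differentiable ℂ f)
    {z : ℂ} (hz : z ∈ frontier (boundedOrbitSet f)) {V : Set ℂ} (hV : IsOpen V) (hzV : z ∈ V)
    (hcount : {C : Set ℂ | (∃ w ∈ boundedOrbitSet f,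
      C = connectedComponentIn (boundedOrbitSet f) w) ∧ (C ∩ V).Nonempty}.Countable) :
    Countable (ConnectedComponents (boundedOrbitSet f)) := by
  rw [hD.boundedOrbitSet_eq_iUnion] at hz
  obtain ⟨x, hxV, hx⟩ := mem_closure_iff.1 (frontier_iUnion_subset_closure_iUnion_frontier _ hz)
    V hV hzV
  obtain ⟨n, hn⟩ := mem_iUnion.1 hx
  exact countable_connectedComponents_of_countable_compl_iUnion_image hf.continuous
    (preimage_boundedOrbitSet f)
    ((hD.hasEscapingFrontier n).subsingleton_compl_iUnion_image_iterate hf hn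
      (hV.mem_nhds hxV)).countable
    (countable_image_mk_of_countable_setOf_connectedComponentIn hcount)

end IsEscapingExhaustion

lemma SurroundsSet.disjoint {S T : Set ℂ} (h : SurroundsSet S T) : Disjoint S T := by
  obtain ⟨z, -, hT, -⟩ := h
  exact disjoint_compl_right.mono_right (hT.trans (connectedComponentIn_subset _ _))

lemma StronglyPolynomialLike.exists_isEscapingExhaustion (h : StronglyPolynomialLike f) :
    ∃ D, IsEscapingExhaustion f D := by
  obtain ⟨D, hopen, hconn, hbdd, -, hsub, hunion, hsurr⟩ := h
  refine ⟨D, fun n ↦ ⟨hopen n, (hbdd n).isCompact_closure, fun z hz ↦ ?_⟩,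
    fun n ↦ (hconn n).isPreconnected,
    monotone_nat_of_le_succ fun n ↦ subset_closure.trans (hsub n), hunion⟩
  exact disjoint_left.1 (hsurr n).disjoint ⟨z, hz, rfl⟩

end EntireDynamics

theorem Kf_connected_or_uncountably_many_components_of_spl_general {f : ℂ → ℂ}
    (hf : Differentiable ℂ f) {D : ℕ → Set ℂ} (hD : IsEscapingExhaustion f D) :
    IsConnected (boundedOrbitSet f) ∨
      ∀ z ∈ frontier (boundedOrbitSet f), ∀ V : Set ℂ, IsOpen V → z ∈ V →
        ¬ {C : Set ℂ |
            (∃ w ∈ boundedOrbitSet f, C = connectedComponentIn (boundedOrbitSet f) w) ∧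
            (C ∩ V).Nonempty}.Countable := by
  rw [or_iff_not_imp_right]
  intro h
  push Not at h
  obtain ⟨z, hz, V, hV, hzV, hcount⟩ := h
  have := hD.countable_connectedComponents hf hz hV hzV hcount
  rw [hD.boundedOrbitSet_eq_iUnion] at this ⊢
  exact ⟨hD.nonempty_iUnion_trappedSet hf.continuous (hD.isOpenMap hf),
    hD.isPreconnected_iUnion_trappedSet hf.continuous (hD.isOpenMap hf)⟩

/-- For a strongly polynomial-like transcendental entire function, either `K(f)` is
connected, or every open neighbourhood of every point of `∂K(f)` meets uncountably many
connected components of `K(f)`. -/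
theorem Kf_connected_or_uncountably_many_components_of_spl (f : ℂ → ℂ)
    (hf : TranscendentalEntire f) (hspl : StronglyPolynomialLike f) :
    IsConnected (boundedOrbitSet f) ∨
      ∀ z ∈ frontier (boundedOrbitSet f), ∀ V : Set ℂ, IsOpen V → z ∈ V →
        ¬ {C : Set ℂ |
            (∃ w ∈ boundedOrbitSet f, C = connectedComponentIn (boundedOrbitSet f) w) ∧
            (C ∩ V).Nonempty}.Countable := by
  obtain ⟨D, hD⟩ := hspl.exists_isEscapingExhaustion
  exact Kf_connected_or_uncountably_many_components_of_spl_general hf.1 hD
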